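/- arXiv:math/0612737 — 2 statements merged into one kernel-verified Lean document; each statement's English description precedes it below -/
import Mathlib

section
/- Let H be a quasitriangular Hopf algebra with antipode γ (with γ invertible), R-matrix R, and involution τ. Suppose S• ∈ H⊗A is invertible and satisfies the conjugate characteristic equation (Δ^op⊗id)(S•) = S•₁₃ (R⁻¹)''₁₂ S•₂₃, where (R⁻¹)'' := (id⊗τ)(R⁻¹₂₁). Then S̄• := (S•)⁻¹ satisfies (Δ⊗id)(S̄•) = S̄•₁₃ ((τγ²)⊗id)(R)₁₂ S̄•₂₃; that is, S̄• is a universal S-matrix for H with the involution τ∘γ². -/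
open TensorProduct

section QT

variable (k H : Type*) [Field k] [Ring H] [Bialgebra k H]

/-- `(Δ ⊗ id)` as a map `H ⊗ H → H ⊗ (H ⊗ H)`. -/
noncomputable def deltaL : H ⊗[k] H →ₗ[k] H ⊗[k] (H ⊗[k] H) :=
  (TensorProduct.assoc k H H H).toLinearMap ∘ₗ
    TensorProduct.map (Coalgebra.comul (R := k)) LinearMap.id

/-- `(id ⊗ Δ)` as a map `H ⊗ H → H ⊗ (H ⊗ H)`. -/
noncomputable def deltaR : H ⊗[k] H →ₗ[k] H ⊗[k] (H ⊗[k] H) :=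
  TensorProduct.map LinearMap.id (Coalgebra.comul (R := k))

/-- embedding of `H ⊗ H` on legs 1, 2 of `H ⊗ H ⊗ H`. -/
noncomputable def leg12 : H ⊗[k] H →ₗ[k] H ⊗[k] (H ⊗[k] H) :=
  TensorProduct.map LinearMap.id ((TensorProduct.mk k H H).flip (1 : H))

/-- embedding of `H ⊗ H` on legs 1, 3 of `H ⊗ H ⊗ H`. -/
noncomputable def leg13 : H ⊗[k] H →ₗ[k] H ⊗[k] (H ⊗[k] H) :=
  TensorProduct.map LinearMap.id (TensorProduct.mk k H H (1 : H))

/-- embedding of `H ⊗ H` on legs 2, 3 of `H ⊗ H ⊗ H`. -/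
noncomputable def leg23 : H ⊗[k] H →ₗ[k] H ⊗[k] (H ⊗[k] H) :=
  TensorProduct.mk k H (H ⊗[k] H) (1 : H)

/-- `R` (with two-sided inverse `Rinv`) is a universal R-matrix (quasitriangular
structure) on the bialgebra `H`. -/
noncomputable def IsUnivRMatrix (R Rinv : H ⊗[k] H) : Prop :=
  R * Rinv = 1 ∧ Rinv * R = 1 ∧
  deltaL k H R = leg13 k H R * leg23 k H R ∧
  deltaR k H R = leg13 k H R * leg12 k H R ∧
  ∀ h : H, R * Coalgebra.comul h =
    (TensorProduct.comm k H H) (Coalgebra.comul h) * R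

/-- `τ` is an involutive coalgebra map and algebra anti-automorphism of `H`. -/
noncomputable def IsSkewInvolution (τ : H →ₗ[k] H) : Prop :=
  (∀ x : H, τ (τ x) = x) ∧ (∀ x y : H, τ (x * y) = τ y * τ x) ∧ τ 1 = 1 ∧
  Coalgebra.comul (R := k) ∘ₗ τ = (TensorProduct.map τ τ) ∘ₗ Coalgebra.comul ∧
  Coalgebra.counit (R := k) ∘ₗ τ = Coalgebra.counit

end QT

section SMat

variable (k H A : Type*) [Field k] [Ring H] [Bialgebra k H] [Ring A] [Algebra k A]

/-- `(Δ ⊗ id) : H ⊗ A → H ⊗ (H ⊗ A)`. -/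
noncomputable def deltaLA : H ⊗[k] A →ₗ[k] H ⊗[k] (H ⊗[k] A) :=
  (TensorProduct.assoc k H H A).toLinearMap ∘ₗ
    TensorProduct.map (Coalgebra.comul (R := k)) LinearMap.id

/-- `(Δ^op ⊗ id) : H ⊗ A → H ⊗ (H ⊗ A)`. -/
noncomputable def deltaOpLA : H ⊗[k] A →ₗ[k] H ⊗[k] (H ⊗[k] A) :=
  (TensorProduct.assoc k H H A).toLinearMap ∘ₗ
    TensorProduct.map ((TensorProduct.comm k H H).toLinearMap ∘ₗ Coalgebra.comul (R := k))
      LinearMap.id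

/-- embedding of `H ⊗ A` on legs 1, 3 of `H ⊗ H ⊗ A`:  `S ↦ S₁₃`. -/
noncomputable def sleg13 : H ⊗[k] A →ₗ[k] H ⊗[k] (H ⊗[k] A) :=
  TensorProduct.map LinearMap.id (TensorProduct.mk k H A (1 : H))

/-- embedding of `H ⊗ A` on legs 2, 3 of `H ⊗ H ⊗ A`:  `S ↦ S₂₃`. -/
noncomputable def sleg23 : H ⊗[k] A →ₗ[k] H ⊗[k] (H ⊗[k] A) :=
  TensorProduct.mk k H (H ⊗[k] A) (1 : H)

/-- embedding of `H ⊗ H` on legs 1, 2 of `H ⊗ H ⊗ A`:  `R ↦ R₁₂`. -/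
noncomputable def rleg12 : H ⊗[k] H →ₗ[k] H ⊗[k] (H ⊗[k] A) :=
  TensorProduct.map LinearMap.id ((TensorProduct.mk k H A).flip (1 : A))

/-- `S ∈ H ⊗ A` is a universal S-matrix for `(H, R, τ)`: it satisfies the
characteristic identity `(Δ⊗id)(S) = S₁₃ R'₁₂ S₂₃` where `R' = (τ⊗id)(R)`. -/
noncomputable def IsSMatrix (R : H ⊗[k] H) (τ : H →ₗ[k] H) (S : H ⊗[k] A) : Prop :=
  deltaLA k H A S =
    sleg13 k H A S * rleg12 k H A ((TensorProduct.map τ LinearMap.id) R) * sleg23 k H A S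

/-- `(ε ⊗ id) : H ⊗ A → A`. -/
noncomputable def epsA : H ⊗[k] A →ₗ[k] A :=
  (TensorProduct.lid k A).toLinearMap ∘ₗ
    TensorProduct.map (Coalgebra.counit (R := k)) LinearMap.id

end SMat

section Helpers

variable {k H A : Type*} [Field k] [Ring H] [HopfAlgebra k H] [Ring A] [Algebra k A]

/-- `a ⊗ b ⊗ c ↦ f(a) b ⊗ c`. -/
noncomputable def contr (f : H →ₗ[k] H) : H ⊗[k] (H ⊗[k] H) →ₗ[k] H ⊗[k] H :=
  TensorProduct.map (LinearMap.mul' k H ∘ₗ f.rTensor H) LinearMap.id ∘ₗ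
    (TensorProduct.assoc k H H H).symm.toLinearMap

/-- `η ∘ ε`. -/
noncomputable def etaEps : H →ₗ[k] H := Algebra.linearMap k H ∘ₗ Coalgebra.counit

theorem contr_legs (f : H →ₗ[k] H) (x y : H ⊗[k] H) :
    contr f (leg13 k H x * leg23 k H y) = TensorProduct.map f LinearMap.id x * y := by
  induction x using TensorProduct.induction_on with
  | zero => simp
  | add a b ha hb => simp only [map_add, add_mul, ha, hb]
  | tmul a b =>
    induction y using TensorProduct.induction_on with
    | zero => simp
    | add a b ha hb => simp only [map_add, mul_add, ha, hb]
    | tmul c d => simp [contr, leg13, leg23]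

theorem contr_antipode (x : H ⊗[k] H) :
    contr (HopfAlgebra.antipode k) (deltaL k H x) =
      TensorProduct.map (etaEps (k := k)) LinearMap.id x := by
  induction x using TensorProduct.induction_on with
  | zero => simp
  | add a b ha hb => simp only [map_add, ha, hb]
  | tmul a b => simp [contr, deltaL, etaEps]

theorem contr_etaEps (x : H ⊗[k] H) :
    contr (etaEps (k := k)) (deltaL k H x) = x := by
  have key : ∀ a : H, LinearMap.mul' k H ((etaEps (k := k)).rTensor H
      (Coalgebra.comul (R := k) a)) = a := by
    intro a
    have h : LinearMap.mul' k H ∘ₗ (etaEps (k := k)).rTensor H =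
        (TensorProduct.lid k H).toLinearMap ∘ₗ
          (Coalgebra.counit (R := k) (A := H)).rTensor H := by
      ext x y
      simp [etaEps, Algebra.smul_def]
    have h2 := LinearMap.congr_fun h (Coalgebra.comul (R := k) a)
    simp only [LinearMap.comp_apply] at h2
    rw [h2]
    simp
  induction x using TensorProduct.induction_on with
  | zero => simp
  | add a b ha hb => simp only [map_add, ha, hb]
  | tmul a b => simp [contr, deltaL, key]

theorem antipode_R (R Rinv : H ⊗[k] H) (hR : IsUnivRMatrix k H R Rinv) :
    TensorProduct.map (HopfAlgebra.antipode k) LinearMap.id R = Rinv := by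
  obtain ⟨h1, h2, h3, -, -⟩ := hR
  have e1 : TensorProduct.map (etaEps (k := k)) LinearMap.id R = 1 := by
    have := contr_etaEps R
    rw [h3, contr_legs] at this
    calc _ = TensorProduct.map (etaEps (k := k)) LinearMap.id R * R * Rinv := by
          rw [mul_assoc, h1, mul_one]
      _ = 1 := by rw [this, h1]
  have e2 := contr_antipode R
  rw [h3, contr_legs, e1] at e2
  exact left_inv_eq_right_inv e2 h1

theorem map_id_mul (f : H →ₗ[k] H) (hf : ∀ x y, f (x * y) = f x * f y) (x y : H ⊗[k] H) :
    TensorProduct.map f LinearMap.id (x * y) =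
      TensorProduct.map f LinearMap.id x * TensorProduct.map f LinearMap.id y :=
  LinearMap.map_mul_of_map_mul_tmul (by intros; simp [hf]) x y

theorem sleg13_mul (x y : H ⊗[k] A) :
    sleg13 k H A (x * y) = sleg13 k H A x * sleg13 k H A y :=
  LinearMap.map_mul_of_map_mul_tmul (by intros; simp [sleg13]) x y

theorem sleg23_mul (x y : H ⊗[k] A) :
    sleg23 k H A (x * y) = sleg23 k H A x * sleg23 k H A y := by
  simp [sleg23]

theorem rleg12_mul (x y : H ⊗[k] H) :
    rleg12 k H A (x * y) = rleg12 k H A x * rleg12 k H A y :=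
  LinearMap.map_mul_of_map_mul_tmul (by intros; simp [rleg12]) x y

theorem deltaLA_mul (x y : H ⊗[k] A) :
    deltaLA k H A (x * y) = deltaLA k H A x * deltaLA k H A y := by
  have h : ∀ z, deltaLA k H A z = ((Algebra.TensorProduct.assoc k k k H H A).toAlgHom.comp
      (Algebra.TensorProduct.map (Bialgebra.comulAlgHom k H) (AlgHom.id k A))) z := fun z => rfl
  simp only [h, map_mul]

theorem sleg13_one : sleg13 k H A 1 = 1 := rfl
theorem sleg23_one : sleg23 k H A 1 = 1 := rfl
theorem rleg12_one : rleg12 k H A 1 = 1 := rfl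
theorem deltaLA_one : deltaLA k H A 1 = 1 := by
  simp [deltaLA, Algebra.TensorProduct.one_def]

/-- flip of the first two legs -/
noncomputable def flipLegs : H ⊗[k] (H ⊗[k] A) →ₐ[k] H ⊗[k] (H ⊗[k] A) :=
  (Algebra.TensorProduct.leftComm k H H A).toAlgHom

theorem flip_tmul (a b : H) (c : A) :
    flipLegs (k := k) (a ⊗ₜ[k] (b ⊗ₜ[k] c)) = b ⊗ₜ[k] (a ⊗ₜ[k] c) := rfl

theorem flip_sleg13 (x : H ⊗[k] A) : flipLegs (sleg13 k H A x) = sleg23 k H A x := by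
  induction x using TensorProduct.induction_on with
  | zero => simp
  | add a b ha hb => simp only [map_add, ha, hb]
  | tmul a b => rfl

theorem flip_sleg23 (x : H ⊗[k] A) : flipLegs (sleg23 k H A x) = sleg13 k H A x := by
  induction x using TensorProduct.induction_on with
  | zero => simp
  | add a b ha hb => simp only [map_add, ha, hb]
  | tmul a b => rfl

theorem flip_rleg12 (τ : H →ₗ[k] H) (x : H ⊗[k] H) :
    flipLegs (rleg12 k H A (TensorProduct.map LinearMap.id τ (TensorProduct.comm k H H x))) =
      rleg12 k H A (TensorProduct.map τ LinearMap.id x) := by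
  induction x using TensorProduct.induction_on with
  | zero => simp
  | add a b ha hb => simp only [map_add, ha, hb]
  | tmul a b => rfl

theorem flip_deltaOp (x : H ⊗[k] A) : flipLegs (deltaOpLA k H A x) = deltaLA k H A x := by
  induction x using TensorProduct.induction_on with
  | zero => simp
  | add a b ha hb => simp only [map_add, ha, hb]
  | tmul a b =>
    simp only [deltaOpLA, deltaLA, LinearMap.comp_apply, TensorProduct.map_tmul,
      LinearEquiv.coe_coe, LinearMap.id_apply]
    induction (Coalgebra.comul (R := k) a) using TensorProduct.induction_on with
    | zero => simp
    | add c d hc hd => simp only [map_add, TensorProduct.add_tmul, hc, hd]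
    | tmul c d => rfl

end Helpers

/-- let `H` be a quasitriangular Hopf algebra with invertible antipode `γ`,
R-matrix `R` and involution `τ`.  If `S• ∈ H ⊗ A` is invertible and satisfies the
conjugate characteristic equation `(Δ^op⊗id)(S•) = S•₁₃ (R⁻¹)''₁₂ S•₂₃`, where
`(R⁻¹)'' = (id⊗τ)(R⁻¹₂₁)`, then its inverse `S̄•` satisfies
`(Δ⊗id)(S̄•) = S̄•₁₃ ((τγ²)⊗id)(R)₁₂ S̄•₂₃`, i.e. `S̄•` is a universal S-matrix for `H`
with the involution `τ ∘ γ²`. -/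
theorem conjugate_SMatrix_inverse
    {k H A : Type*} [Field k] [Ring H] [HopfAlgebra k H] [Ring A] [Algebra k A]
    (γinv : H →ₗ[k] H)
    (hγ1 : ∀ h : H, γinv (HopfAlgebra.antipode (R := k) h) = h)
    (hγ2 : ∀ h : H, HopfAlgebra.antipode (R := k) (γinv h) = h)
    (R Rinv : H ⊗[k] H) (hR : IsUnivRMatrix k H R Rinv)
    (τ : H →ₗ[k] H) (hτ : IsSkewInvolution k H τ)
    (Sb SbInv : H ⊗[k] A)
    (hSb1 : Sb * SbInv = 1) (hSb2 : SbInv * Sb = 1)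
    (hchar : deltaOpLA k H A Sb =
      sleg13 k H A Sb *
        rleg12 k H A ((TensorProduct.map LinearMap.id τ) ((TensorProduct.comm k H H) Rinv)) *
        sleg23 k H A Sb) :
    deltaLA k H A SbInv =
      sleg13 k H A SbInv *
        rleg12 k H A ((TensorProduct.map
          (τ ∘ₗ (HopfAlgebra.antipode (R := k) (A := H)) ∘ₗ
            (HopfAlgebra.antipode (R := k) (A := H))) LinearMap.id) R) *
        sleg23 k H A SbInv := by
  obtain ⟨-, hτm, hτ1, -, -⟩ := hτ
  set γ : H →ₗ[k] H := HopfAlgebra.antipode k with hγ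
  have hRi := antipode_R R Rinv hR
  rw [← hγ] at hRi
  have hφ : ∀ x y, (τ ∘ₗ γ) (x * y) = (τ ∘ₗ γ) x * (τ ∘ₗ γ) y := by
    intro x y
    simp [hγ, HopfAlgebra.antipode_mul_antidistrib, hτm]
  have hφ1 : TensorProduct.map (τ ∘ₗ γ) LinearMap.id (1 : H ⊗[k] H) = 1 := by
    simp [Algebra.TensorProduct.one_def, hγ, hτ1]
  have hP : TensorProduct.map τ LinearMap.id Rinv =
      TensorProduct.map (τ ∘ₗ γ) LinearMap.id R := by
    rw [← hRi, ← LinearMap.comp_apply, ← TensorProduct.map_comp, LinearMap.id_comp]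
  have hQ : TensorProduct.map (τ ∘ₗ γ ∘ₗ γ) LinearMap.id R =
      TensorProduct.map (τ ∘ₗ γ) LinearMap.id Rinv := by
    rw [← hRi, ← LinearMap.comp_apply (TensorProduct.map (τ ∘ₗ γ) LinearMap.id),
      ← TensorProduct.map_comp, LinearMap.id_comp, LinearMap.comp_assoc]
  have hQP : rleg12 k H A (TensorProduct.map (τ ∘ₗ γ ∘ₗ γ) LinearMap.id R) *
      rleg12 k H A (TensorProduct.map τ LinearMap.id Rinv) = 1 := by
    rw [← rleg12_mul, hP, hQ, ← map_id_mul _ hφ, hR.2.1, hφ1, rleg12_one]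
  have hD := congrArg flipLegs hchar
  rw [map_mul, map_mul, flip_deltaOp, flip_sleg13, flip_sleg23, flip_rleg12] at hD
  have h13 : sleg13 k H A SbInv * sleg13 k H A Sb = 1 := by
    rw [← sleg13_mul, hSb2, sleg13_one]
  have h23 : sleg23 k H A SbInv * sleg23 k H A Sb = 1 := by
    rw [← sleg23_mul, hSb2, sleg23_one]
  have hDD : deltaLA k H A Sb * deltaLA k H A SbInv = 1 := by
    rw [← deltaLA_mul, hSb1, deltaLA_one]
  symm
  refine left_inv_eq_right_inv (a := deltaLA k H A Sb) ?_ hDD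
  rw [hD]
  generalize sleg13 k H A SbInv = a at *
  generalize sleg13 k H A Sb = a' at *
  generalize sleg23 k H A SbInv = b at *
  generalize sleg23 k H A Sb = b' at *
  generalize rleg12 k H A (TensorProduct.map (τ ∘ₗ γ ∘ₗ γ) LinearMap.id R) = q at *
  generalize rleg12 k H A (TensorProduct.map τ LinearMap.id Rinv) = p at *
  calc a * q * b * (b' * p * a') = a * (q * ((b * b') * p)) * a' := by
        simp only [mul_assoc]
    _ = 1 := by rw [h23, one_mul, hQP, mul_one, h13]
end

section
/- Let H be a quasitriangular bialgebra with universal R-matrix R and let τ be an involutive coalgebra and anti-algebra automorphism of H. Define maps Φ⁺, Φ⁻: H*_op → H by Φ⁺(η) = ⟨η, τ(R₁)⟩ τ(R₂) and Φ⁻(η) = ⟨η, R₂⟩ R₁. Then the map Φ: H*_op → H⊗H given by Φ(η) = Φ⁺(η⁽¹⁾) ⊗ Φ⁻(η⁽²⁾) is a bialgebra homomorphism from H*_op into the twisted tensor square H ⊗_{R_τ} H (the bialgebra which equals H⊗H as an algebra, with comultiplication twisted by the cocycle (R_τ)₂₃ where R_τ = (τ⊗τ)(R⁻¹)). -/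
open TensorProduct

section DualAlg

variable (k H : Type*) [Field k] [Ring H] [Bialgebra k H]

/-- convolution product on the dual `H* = Module.Dual k H`. -/
noncomputable def conv (f g : Module.Dual k H) : Module.Dual k H :=
  (LinearMap.mul' k k) ∘ₗ (TensorProduct.map f g) ∘ₗ (Coalgebra.comul (R := k))

/-- left coregular action `h ⇀ a`, `(h ⇀ a)(x) = a (x * h)`. -/
noncomputable def lact (h : H) (a : Module.Dual k H) : Module.Dual k H :=
  a ∘ₗ LinearMap.mulRight k h

/-- right coregular action `a ↼ h`, `(a ↼ h)(x) = a (h * x)`. -/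
noncomputable def ract (a : Module.Dual k H) (h : H) : Module.Dual k H :=
  a ∘ₗ LinearMap.mulLeft k h

/-- an invariant element of `H*`: `h ⇀ a = a ↼ h` for all `h`. -/
noncomputable def IsInvariantDual (a : Module.Dual k H) : Prop :=
  ∀ h : H, lact k H h a = ract k H a h

end DualAlg

section Phi

variable (k H : Type*) [Field k] [Ring H] [Bialgebra k H]

/-- contraction against the first leg of a fixed `u ∈ H ⊗ H`:  `η ↦ (η ⊗ id)(u)`. -/
noncomputable def contractFst (u : H ⊗[k] H) : Module.Dual k H →ₗ[k] H where
  toFun f := (TensorProduct.lid k H) ((TensorProduct.map f LinearMap.id) u)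
  map_add' f g := by simp [TensorProduct.map_add_left]
  map_smul' c f := by simp [TensorProduct.map_smul_left]

/-- contraction against the second leg of a fixed `u ∈ H ⊗ H`:  `η ↦ (id ⊗ η)(u)`. -/
noncomputable def contractSnd (u : H ⊗[k] H) : Module.Dual k H →ₗ[k] H where
  toFun f := (TensorProduct.rid k H) ((TensorProduct.map LinearMap.id f) u)
  map_add' f g := by simp [TensorProduct.map_add_right]
  map_smul' c f := by simp [TensorProduct.map_smul_right]

variable [FiniteDimensional k H]

/-- dual comultiplication on `H*` (dual to the multiplication of `H`). -/
noncomputable def comulDual :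
    Module.Dual k H →ₗ[k] Module.Dual k H ⊗[k] Module.Dual k H :=
  (TensorProduct.dualDistribEquiv k H H).symm.toLinearMap ∘ₗ
    (LinearMap.mul' k H).dualMap

/-- the natural comultiplication of `H ⊗ H`, `x ⊗ y ↦ (x⁽¹⁾ ⊗ y⁽¹⁾) ⊗ (x⁽²⁾ ⊗ y⁽²⁾)`. -/
noncomputable def comulSq :
    H ⊗[k] H →ₗ[k] (H ⊗[k] H) ⊗[k] (H ⊗[k] H) :=
  (TensorProduct.tensorTensorTensorComm k H H H H).toLinearMap ∘ₗ
    TensorProduct.map (Coalgebra.comul (R := k)) (Coalgebra.comul (R := k))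

/-- embedding of `H ⊗ H` on legs 2, 3 of `(H ⊗ H) ⊗ (H ⊗ H)`. -/
noncomputable def sqleg23 : H ⊗[k] H →ₗ[k] (H ⊗[k] H) ⊗[k] (H ⊗[k] H) :=
  TensorProduct.map (TensorProduct.mk k H H (1 : H)) ((TensorProduct.mk k H H).flip (1 : H))

end Phi


section Aux

variable {k H A B : Type*} [Field k] [Ring H] [Bialgebra k H] [Ring A] [Algebra k A]
  [Ring B] [Algebra k B]

/-- `x ⊗ y ↦ f x * g y`. -/
noncomputable def LL (f g : H →ₗ[k] A) : H ⊗[k] H →ₗ[k] A :=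
  LinearMap.mul' k A ∘ₗ TensorProduct.map f g

@[simp] lemma LL_tmul (f g : H →ₗ[k] A) (x y : H) : LL f g (x ⊗ₜ[k] y) = f x * g y := by
  simp [LL]

/-- elementwise commutation of two maps. -/
def Com (f g : H →ₗ[k] A) : Prop := ∀ x y, f x * g y = g y * f x

lemma Com.symm {f g : H →ₗ[k] A} (h : Com f g) : Com g f := fun x y => (h y x).symm

lemma LL_comm {f g : H →ₗ[k] A} (h : Com f g) (u : H ⊗[k] H) :
    LL f g (TensorProduct.comm k H H u) = LL g f u := by
  induction u with
  | zero => simp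
  | add a b ha hb => simp only [map_add, ha, hb]
  | tmul x y => simp [h y x]

lemma LL_commute {f g f' g' : H →ₗ[k] A} (h1 : Com f f') (h2 : Com f g') (h3 : Com g f')
    (h4 : Com g g') (u v : H ⊗[k] H) : LL f g u * LL f' g' v = LL f' g' v * LL f g u := by
  induction u with
  | zero => simp
  | add a b ha hb => simp only [map_add, add_mul, mul_add, ha, hb]
  | tmul x y =>
    induction v with
    | zero => simp
    | add a b ha hb => simp only [map_add, add_mul, mul_add, ha, hb]
    | tmul z w =>
      simp only [LL_tmul]
      have e1 := h1 x z
      have e2 := h2 x w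
      have e3 := h3 y z
      have e4 := h4 y w
      calc f x * g y * (f' z * g' w) = f x * (g y * f' z) * g' w := by simp only [mul_assoc]
        _ = (f x * f' z) * (g y * g' w) := by rw [e3]; simp only [mul_assoc]
        _ = f' z * (f x * g' w) * g y := by rw [e1, e4]; simp only [mul_assoc]
        _ = f' z * g' w * (f x * g y) := by rw [e2]; simp only [mul_assoc]

lemma LL_mul (f g : H →ₐ[k] A) (h : Com f.toLinearMap g.toLinearMap) (u v : H ⊗[k] H) :
    LL f.toLinearMap g.toLinearMap (u * v)
      = LL f.toLinearMap g.toLinearMap u * LL f.toLinearMap g.toLinearMap v := by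
  induction u with
  | zero => simp
  | add a b ha hb => simp only [map_add, add_mul, ha, hb]
  | tmul x y =>
    induction v with
    | zero => simp
    | add a b ha hb => simp only [map_add, mul_add, ha, hb]
    | tmul z w =>
      have e := h z y
      simp only [AlgHom.toLinearMap_apply] at e
      simp only [LL_tmul, Algebra.TensorProduct.tmul_mul_tmul, AlgHom.toLinearMap_apply, map_mul]
      calc f x * f z * (g y * g w) = f x * (f z * g y) * g w := by simp only [mul_assoc]
        _ = _ := by rw [e]; simp only [mul_assoc]

lemma LL_hom (E : A →ₐ[k] B) (f g : H →ₗ[k] A) (u : H ⊗[k] H) :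
    E (LL f g u) = LL (E.toLinearMap ∘ₗ f) (E.toLinearMap ∘ₗ g) u := by
  induction u with
  | zero => simp
  | add a b ha hb => simp only [map_add, ha, hb]
  | tmul x y => simp

/-- `x ⊗ (y ⊗ z) ↦ f x * (g y * h z)`. -/
noncomputable def L3 (f g h : H →ₗ[k] A) : H ⊗[k] (H ⊗[k] H) →ₗ[k] A :=
  LinearMap.mul' k A ∘ₗ TensorProduct.map f (LL g h)

@[simp] lemma L3_tmul (f g h : H →ₗ[k] A) (x y z : H) :
    L3 f g h (x ⊗ₜ[k] (y ⊗ₜ[k] z)) = f x * (g y * h z) := by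
  simp [L3]

@[simp] lemma L3_tmul' (f g h : H →ₗ[k] A) (x : H) (u : H ⊗[k] H) :
    L3 f g h (x ⊗ₜ[k] u) = f x * LL g h u := by
  simp [L3]

lemma Com_LL {f g h : H →ₗ[k] A} (h1 : Com f g) (h2 : Com f h) (x : H) (u : H ⊗[k] H) :
    f x * LL g h u = LL g h u * f x := by
  induction u with
  | zero => simp
  | add a b ha hb => simp only [map_add, add_mul, mul_add, ha, hb]
  | tmul y z => rw [LL_tmul, ← mul_assoc, h1, mul_assoc, h2, mul_assoc]

lemma L3_mul (f g h : H →ₐ[k] A) (h1 : Com f.toLinearMap g.toLinearMap)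
    (h2 : Com f.toLinearMap h.toLinearMap) (h3 : Com g.toLinearMap h.toLinearMap)
    (u v : H ⊗[k] (H ⊗[k] H)) :
    L3 f.toLinearMap g.toLinearMap h.toLinearMap (u * v)
      = L3 f.toLinearMap g.toLinearMap h.toLinearMap u
        * L3 f.toLinearMap g.toLinearMap h.toLinearMap v := by
  induction u with
  | zero => simp
  | add a b ha hb => simp only [map_add, add_mul, ha, hb]
  | tmul x y =>
    induction v with
    | zero => simp
    | add a b ha hb => simp only [map_add, mul_add, ha, hb]
    | tmul z w =>
      rw [Algebra.TensorProduct.tmul_mul_tmul, L3_tmul', L3_tmul', L3_tmul', LL_mul g h h3]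
      have e := Com_LL h1 h2 z y
      simp only [AlgHom.toLinearMap_apply, map_mul] at e ⊢
      rw [mul_assoc, ← mul_assoc (f z), e]; simp only [mul_assoc]

lemma L3_leg12 (f g h : H →ₐ[k] A) (u : H ⊗[k] H) :
    L3 f.toLinearMap g.toLinearMap h.toLinearMap (leg12 k H u)
      = LL f.toLinearMap g.toLinearMap u := by
  induction u with
  | zero => simp
  | add a b ha hb => simp only [map_add, ha, hb]
  | tmul x y => simp [leg12]

lemma L3_leg13 (f g h : H →ₐ[k] A) (u : H ⊗[k] H) :
    L3 f.toLinearMap g.toLinearMap h.toLinearMap (leg13 k H u)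
      = LL f.toLinearMap h.toLinearMap u := by
  induction u with
  | zero => simp
  | add a b ha hb => simp only [map_add, ha, hb]
  | tmul x y => simp [leg13]

lemma L3_leg23 (f g h : H →ₐ[k] A) (u : H ⊗[k] H) :
    L3 f.toLinearMap g.toLinearMap h.toLinearMap (leg23 k H u)
      = LL g.toLinearMap h.toLinearMap u := by
  simp [leg23]

lemma L3_deltaL (f g h : H →ₗ[k] A) (u : H ⊗[k] H) :
    L3 f g h (deltaL k H u) = LL (LL f g ∘ₗ Coalgebra.comul) h u := by
  have key : ∀ (w : H ⊗[k] H) (y : H),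
      L3 f g h (TensorProduct.assoc k H H H (w ⊗ₜ y)) = LL f g w * h y := by
    intro w y
    induction w with
    | zero => simp
    | add a b ha hb => simp only [map_add, add_mul, TensorProduct.add_tmul, ha, hb]
    | tmul x z => simp [mul_assoc]
  induction u with
  | zero => simp
  | add a b ha hb => simp only [map_add, ha, hb]
  | tmul x y => simp [deltaL, key]

lemma L3_deltaR (f g h : H →ₗ[k] A) (u : H ⊗[k] H) :
    L3 f g h (deltaR k H u) = LL f (LL g h ∘ₗ Coalgebra.comul) u := by
  induction u with
  | zero => simp
  | add a b ha hb => simp only [map_add, ha, hb]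
  | tmul x y => simp [deltaR]

/-- contraction of the first leg. -/
noncomputable def ctr (X : H ⊗[k] A) (η : Module.Dual k H) : A :=
  TensorProduct.lid k A (TensorProduct.map η LinearMap.id X)

@[simp] lemma ctr_tmul (x : H) (a : A) (η : Module.Dual k H) :
    ctr (x ⊗ₜ[k] a) η = η x • a := by simp [ctr]

@[simp] lemma ctr_zero (η : Module.Dual k H) : ctr (0 : H ⊗[k] A) η = 0 := by simp [ctr]

lemma ctr_add (X Y : H ⊗[k] A) (η : Module.Dual k H) :
    ctr (X + Y) η = ctr X η + ctr Y η := by simp [ctr]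

lemma ctr_map (φ : A →ₗ[k] B) (X : H ⊗[k] A) (η : Module.Dual k H) :
    ctr (TensorProduct.map LinearMap.id φ X) η = φ (ctr X η) := by
  induction X with
  | zero => simp
  | add a b ha hb => simp only [map_add, ctr_add, ha, hb]
  | tmul x y => simp

lemma ctr_mul_left (X : H ⊗[k] A) (a : A) (η : Module.Dual k H) :
    ctr (((1 : H) ⊗ₜ[k] a) * X) η = a * ctr X η := by
  induction X with
  | zero => simp
  | add a b ha hb => simp only [mul_add, ctr_add, ha, hb]
  | tmul x y => simp

lemma ctr_mul_right (X : H ⊗[k] A) (a : A) (η : Module.Dual k H) :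
    ctr (X * ((1 : H) ⊗ₜ[k] a)) η = ctr X η * a := by
  induction X with
  | zero => simp
  | add a b ha hb => simp only [add_mul, ctr_add, ha, hb]
  | tmul x y => simp

/-- inclusion `H ⊗ A → H ⊗ (A ⊗ B)`. -/
noncomputable def incl : H ⊗[k] A →ₐ[k] H ⊗[k] (A ⊗[k] B) :=
  Algebra.TensorProduct.map (AlgHom.id k H) Algebra.TensorProduct.includeLeft

/-- inclusion `H ⊗ B → H ⊗ (A ⊗ B)`. -/
noncomputable def incr : H ⊗[k] B →ₐ[k] H ⊗[k] (A ⊗[k] B) :=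
  Algebra.TensorProduct.map (AlgHom.id k H) Algebra.TensorProduct.includeRight

@[simp] lemma incl_tmul (x : H) (a : A) :
    (incl : H ⊗[k] A →ₐ[k] H ⊗[k] (A ⊗[k] B)) (x ⊗ₜ a) = x ⊗ₜ (a ⊗ₜ 1) := by simp [incl]

@[simp] lemma incr_tmul (x : H) (b : B) :
    (incr : H ⊗[k] B →ₐ[k] H ⊗[k] (A ⊗[k] B)) (x ⊗ₜ b) = x ⊗ₜ (1 ⊗ₜ b) := by simp [incr]

lemma map_ctr_comulDual [FiniteDimensional k H] (X : H ⊗[k] A) (Y : H ⊗[k] B)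
    (F : Module.Dual k H →ₗ[k] A) (G : Module.Dual k H →ₗ[k] B)
    (hF : ∀ f, F f = ctr X f) (hG : ∀ f, G f = ctr Y f) (η : Module.Dual k H) :
    TensorProduct.map F G (comulDual k H η) = ctr (incl X * incr Y) η := by
  have key : ∀ ω : Module.Dual k H ⊗[k] Module.Dual k H, ∀ η : Module.Dual k H,
      TensorProduct.dualDistrib k H H ω = η ∘ₗ LinearMap.mul' k H →
      TensorProduct.map F G ω = ctr (incl X * incr Y) η := by
    intro ω η h
    have h2 : TensorProduct.map F G ω = TensorProduct.lid k (A ⊗[k] B) (TensorProduct.map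
        (TensorProduct.dualDistrib k H H ω) LinearMap.id
          (TensorProduct.tensorTensorTensorComm k H A H B (X ⊗ₜ Y))) := by
      clear h
      induction ω with
      | zero => simp
      | add a b ha hb => simp only [map_add, ha, hb, TensorProduct.map_add_left, LinearMap.add_apply]
      | tmul f g =>
        rw [TensorProduct.map_tmul, hF, hG]
        clear hF hG
        induction X with
        | zero => simp
        | add a b ha hb =>
          simp only [map_add, TensorProduct.add_tmul, ctr_add, ha, hb]
        | tmul x a =>
          induction Y with
          | zero => simp
          | add a b ha hb => simp only [map_add, TensorProduct.tmul_add, ctr_add, ha, hb]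
          | tmul y b =>
            rw [ctr_tmul, ctr_tmul, TensorProduct.smul_tmul_smul]
            simp
    rw [h2, h]
    clear h2 hF hG h
    induction X with
    | zero => simp
    | add a b ha hb => simp only [map_add, TensorProduct.add_tmul, add_mul, ctr_add, ha, hb]
    | tmul x a =>
      induction Y with
      | zero => simp
      | add a b ha hb => simp only [map_add, TensorProduct.tmul_add, mul_add, ctr_add, ha, hb]
      | tmul y b => simp
  apply key
  have := (TensorProduct.dualDistribEquiv k H H).apply_symm_apply ((LinearMap.mul' k H).dualMap η)
  exact this

/-- double contraction. -/
noncomputable def ctr2 (X : H ⊗[k] (H ⊗[k] A)) (ξ η : Module.Dual k H) : A := ctr (ctr X ξ) η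

/-- comultiply the first leg. -/
noncomputable def DD : H ⊗[k] A →ₐ[k] H ⊗[k] (H ⊗[k] A) :=
  (Algebra.TensorProduct.assoc k k k H H A).toAlgHom.comp
    (Algebra.TensorProduct.map (Bialgebra.comulAlgHom k H) (AlgHom.id k A))

lemma DD_tmul (x : H) (a : A) :
    DD (x ⊗ₜ[k] a) = TensorProduct.assoc k H H A (Coalgebra.comul x ⊗ₜ a) := by
  simp [DD]; rfl

lemma ctr_conv (X : H ⊗[k] A) (ξ η : Module.Dual k H) :
    ctr X (conv k H ξ η) = ctr2 (DD X) ξ η := by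
  have key : ∀ (w : H ⊗[k] H) (a : A), ctr2 (TensorProduct.assoc k H H A (w ⊗ₜ a)) ξ η =
      (LinearMap.mul' k k (TensorProduct.map ξ η w)) • a := by
    intro w a
    induction w with
    | zero => simp [ctr2]
    | add x y hx hy =>
      simp only [ctr2] at hx hy
      simp only [ctr2, map_add, add_smul, TensorProduct.add_tmul, ctr_add, hx, hy]
    | tmul x y => simp [ctr2, ctr, smul_smul]
  induction X with
  | zero => simp [ctr2]
  | add a b ha hb => simp only [ctr2, map_add, ctr_add] at *; rw [ha, hb]
  | tmul x a => rw [DD_tmul, key]; simp [conv]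

lemma ctr_mul_ctr (X Y : H ⊗[k] A) (ξ η : Module.Dual k H) :
    ctr X η * ctr Y ξ = ctr2 (((1 : H) ⊗ₜ[k] X) * incr Y) ξ η := by
  unfold ctr2
  rw [ctr_mul_left]
  induction Y with
  | zero => simp
  | add a b ha hb => simp only [mul_add, map_add, ctr_add, ha, hb]
  | tmul y b =>
    rw [incr_tmul, ctr_tmul, ctr_tmul, mul_smul_comm, mul_smul_comm]
    have : ctr (X * ((1 : H) ⊗ₜ[k] b)) η = ctr X η * b := ctr_mul_right X b η
    rw [← this]
    simp [ctr]

/-- algebra map form of an augmentation. -/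
noncomputable def aug : H →ₐ[k] A := (Algebra.ofId k A).comp (Bialgebra.counitAlgHom k H)

lemma LL_aug_right (f : H →ₗ[k] A) (u : H ⊗[k] H) :
    LL f (aug : H →ₐ[k] A).toLinearMap u
      = f (TensorProduct.rid k H (TensorProduct.map LinearMap.id Coalgebra.counit u)) := by
  induction u with
  | zero => simp
  | add a b ha hb => simp only [map_add, ha, hb]
  | tmul x y =>
    simp only [LL_tmul, aug, AlgHom.toLinearMap_apply, AlgHom.comp_apply, Algebra.ofId_apply,
      Bialgebra.counitAlgHom_apply, TensorProduct.map_tmul, LinearMap.id_apply,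
      TensorProduct.rid_tmul, map_smul]
    rw [Algebra.smul_def, Algebra.commutes]

lemma LL_aug_left (f : H →ₗ[k] A) (u : H ⊗[k] H) :
    LL (aug : H →ₐ[k] A).toLinearMap f u
      = f (TensorProduct.lid k H (TensorProduct.map Coalgebra.counit LinearMap.id u)) := by
  induction u with
  | zero => simp
  | add a b ha hb => simp only [map_add, ha, hb]
  | tmul x y =>
    simp only [LL_tmul, aug, AlgHom.toLinearMap_apply, AlgHom.comp_apply, Algebra.ofId_apply,
      Bialgebra.counitAlgHom_apply, TensorProduct.map_tmul, LinearMap.id_apply,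
      TensorProduct.lid_tmul, map_smul]
    rw [Algebra.smul_def]

lemma contractSnd_eq (u : H ⊗[k] H) (f : Module.Dual k H) :
    contractSnd k H u f = ctr (TensorProduct.comm k H H u) f := by
  change TensorProduct.rid k H (TensorProduct.map LinearMap.id f u) = _
  induction u with
  | zero => simp
  | add a b ha hb => simp only [map_add, ctr_add, ha, hb]
  | tmul x y => simp

lemma aug_com_left (f : H →ₗ[k] A) : Com (aug : H →ₐ[k] A).toLinearMap f := by
  intro x y
  simp [aug, Algebra.ofId_apply, Algebra.commutes]

lemma aug_com_right (f : H →ₗ[k] A) : Com f (aug : H →ₐ[k] A).toLinearMap :=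
  (aug_com_left f).symm

lemma LL_aug_comul (f : H →ₗ[k] A) :
    LL (aug : H →ₐ[k] A).toLinearMap f ∘ₗ Coalgebra.comul = f := by
  ext x
  rw [LinearMap.comp_apply, LL_aug_left]
  have := Coalgebra.rTensor_counit_comul (R := k) x
  rw [LinearMap.rTensor] at this
  rw [this]; simp

lemma LL_comul_aug (f : H →ₗ[k] A) :
    LL f (aug : H →ₐ[k] A).toLinearMap ∘ₗ Coalgebra.comul = f := by
  ext x
  rw [LinearMap.comp_apply, LL_aug_right]
  have := Coalgebra.lTensor_counit_comul (R := k) x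
  rw [LinearMap.lTensor] at this
  rw [this]; simp

lemma LL_incl (u : H ⊗[k] H) :
    LL (Algebra.TensorProduct.includeLeft : H →ₐ[k] H ⊗[k] H).toLinearMap
      (Algebra.TensorProduct.includeRight : H →ₐ[k] H ⊗[k] H).toLinearMap u = u := by
  induction u with
  | zero => simp
  | add a b ha hb => simp only [map_add, ha, hb]
  | tmul x y => simp

variable {R Rinv : H ⊗[k] H} {τ : H →ₗ[k] H}

section Rlemmas

variable (f g h : H →ₐ[k] A) (h1 : Com f.toLinearMap g.toLinearMap)
    (h2 : Com f.toLinearMap h.toLinearMap) (h3 : Com g.toLinearMap h.toLinearMap)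

lemma R_left (hR : IsUnivRMatrix k H R Rinv) (h1 : Com f.toLinearMap g.toLinearMap)
    (h2 : Com f.toLinearMap h.toLinearMap) (h3 : Com g.toLinearMap h.toLinearMap) :
    LL (LL f.toLinearMap g.toLinearMap ∘ₗ Coalgebra.comul) h.toLinearMap R
      = LL f.toLinearMap h.toLinearMap R * LL g.toLinearMap h.toLinearMap R := by
  rw [← L3_deltaL, hR.2.2.1, L3_mul f g h h1 h2 h3, L3_leg13, L3_leg23]

lemma R_right (hR : IsUnivRMatrix k H R Rinv) (h1 : Com f.toLinearMap g.toLinearMap)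
    (h2 : Com f.toLinearMap h.toLinearMap) (h3 : Com g.toLinearMap h.toLinearMap) :
    LL f.toLinearMap (LL g.toLinearMap h.toLinearMap ∘ₗ Coalgebra.comul) R
      = LL f.toLinearMap h.toLinearMap R * LL f.toLinearMap g.toLinearMap R := by
  rw [← L3_deltaR, hR.2.2.2.1, L3_mul f g h h1 h2 h3, L3_leg13, L3_leg12]

/-- `τ ⊗ τ ⊗ τ`. -/
noncomputable def tau3 (τ : H →ₗ[k] H) : H ⊗[k] (H ⊗[k] H) →ₗ[k] H ⊗[k] (H ⊗[k] H) :=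
  TensorProduct.map τ (TensorProduct.map τ τ)

lemma tau2_mul (hτ : IsSkewInvolution k H τ) (u v : H ⊗[k] H) :
    TensorProduct.map τ τ (u * v) = TensorProduct.map τ τ v * TensorProduct.map τ τ u := by
  induction u with
  | zero => simp
  | add a b ha hb => simp only [map_add, add_mul, mul_add, ha, hb]
  | tmul x y =>
    induction v with
    | zero => simp
    | add a b ha hb => simp only [map_add, add_mul, mul_add, ha, hb]
    | tmul z w => simp [hτ.2.1]

lemma tau3_mul (hτ : IsSkewInvolution k H τ) (u v : H ⊗[k] (H ⊗[k] H)) :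
    tau3 τ (u * v) = tau3 τ v * tau3 τ u := by
  induction u with
  | zero => simp
  | add a b ha hb => simp only [map_add, add_mul, mul_add, ha, hb]
  | tmul x y =>
    induction v with
    | zero => simp
    | add a b ha hb => simp only [map_add, add_mul, mul_add, ha, hb]
    | tmul z w => simp [tau3, hτ.2.1, tau2_mul hτ]

lemma comul_tau (hτ : IsSkewInvolution k H τ) (x : H) :
    Coalgebra.comul (R := k) (τ x) = TensorProduct.map τ τ (Coalgebra.comul x) :=
  LinearMap.congr_fun hτ.2.2.2.1 x

lemma tau3_leg12 (hτ : IsSkewInvolution k H τ) (u : H ⊗[k] H) :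
    tau3 τ (leg12 k H u) = leg12 k H (TensorProduct.map τ τ u) := by
  induction u with
  | zero => simp
  | add a b ha hb => simp only [map_add, ha, hb]
  | tmul x y => simp [tau3, leg12, hτ.2.2.1]

lemma tau3_leg13 (hτ : IsSkewInvolution k H τ) (u : H ⊗[k] H) :
    tau3 τ (leg13 k H u) = leg13 k H (TensorProduct.map τ τ u) := by
  induction u with
  | zero => simp
  | add a b ha hb => simp only [map_add, ha, hb]
  | tmul x y => simp [tau3, leg13, hτ.2.2.1]

lemma tau3_leg23 (hτ : IsSkewInvolution k H τ) (u : H ⊗[k] H) :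
    tau3 τ (leg23 k H u) = leg23 k H (TensorProduct.map τ τ u) := by
  simp [tau3, leg23, hτ.2.2.1]

lemma tau3_deltaR (hτ : IsSkewInvolution k H τ) (u : H ⊗[k] H) :
    tau3 τ (deltaR k H u) = deltaR k H (TensorProduct.map τ τ u) := by
  induction u with
  | zero => simp
  | add a b ha hb => simp only [map_add, ha, hb]
  | tmul x y => simp [tau3, deltaR, comul_tau hτ]

lemma tau3_deltaL (hτ : IsSkewInvolution k H τ) (u : H ⊗[k] H) :
    tau3 τ (deltaL k H u) = deltaL k H (TensorProduct.map τ τ u) := by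
  have key : ∀ (w : H ⊗[k] H) (y : H), tau3 τ (TensorProduct.assoc k H H H (w ⊗ₜ y))
      = TensorProduct.assoc k H H H (TensorProduct.map τ τ w ⊗ₜ τ y) := by
    intro w y
    induction w with
    | zero => simp
    | add a b ha hb => simp only [map_add, TensorProduct.add_tmul, ha, hb]
    | tmul x z => simp [tau3]
  induction u with
  | zero => simp
  | add a b ha hb => simp only [map_add, ha, hb]
  | tmul x y => simp [deltaL, comul_tau hτ, key]

lemma S_left (hR : IsUnivRMatrix k H R Rinv) (hτ : IsSkewInvolution k H τ)
    (h1 : Com f.toLinearMap g.toLinearMap)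
    (h2 : Com f.toLinearMap h.toLinearMap) (h3 : Com g.toLinearMap h.toLinearMap) :
    LL (LL f.toLinearMap g.toLinearMap ∘ₗ Coalgebra.comul) h.toLinearMap (TensorProduct.map τ τ R)
      = LL g.toLinearMap h.toLinearMap (TensorProduct.map τ τ R)
        * LL f.toLinearMap h.toLinearMap (TensorProduct.map τ τ R) := by
  rw [← L3_deltaL, ← tau3_deltaL hτ, hR.2.2.1, tau3_mul hτ, tau3_leg13 hτ, tau3_leg23 hτ,
    L3_mul f g h h1 h2 h3, L3_leg13, L3_leg23]

lemma S_right (hR : IsUnivRMatrix k H R Rinv) (hτ : IsSkewInvolution k H τ)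
    (h1 : Com f.toLinearMap g.toLinearMap)
    (h2 : Com f.toLinearMap h.toLinearMap) (h3 : Com g.toLinearMap h.toLinearMap) :
    LL f.toLinearMap (LL g.toLinearMap h.toLinearMap ∘ₗ Coalgebra.comul) (TensorProduct.map τ τ R)
      = LL f.toLinearMap g.toLinearMap (TensorProduct.map τ τ R)
        * LL f.toLinearMap h.toLinearMap (TensorProduct.map τ τ R) := by
  rw [← L3_deltaR, ← tau3_deltaR hτ, hR.2.2.2.1, tau3_mul hτ, tau3_leg13 hτ, tau3_leg12 hτ,
    L3_mul f g h h1 h2 h3, L3_leg13, L3_leg12]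

lemma YB (hR : IsUnivRMatrix k H R Rinv) (hτ : IsSkewInvolution k H τ)
    (h1 : Com f.toLinearMap g.toLinearMap)
    (h2 : Com f.toLinearMap h.toLinearMap) (h3 : Com g.toLinearMap h.toLinearMap) :
    LL f.toLinearMap g.toLinearMap R * (LL g.toLinearMap h.toLinearMap (TensorProduct.map τ τ R)
        * LL f.toLinearMap h.toLinearMap (TensorProduct.map τ τ R))
      = (LL f.toLinearMap h.toLinearMap (TensorProduct.map τ τ R)
        * LL g.toLinearMap h.toLinearMap (TensorProduct.map τ τ R))
          * LL f.toLinearMap g.toLinearMap R := by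
  rw [← S_left f g h hR hτ h1 h2 h3, ← S_left g f h hR hτ h1.symm h3 h2]
  have key : ∀ u : H ⊗[k] H, LL f.toLinearMap g.toLinearMap R *
      LL (LL f.toLinearMap g.toLinearMap ∘ₗ Coalgebra.comul) h.toLinearMap u =
      LL (LL g.toLinearMap f.toLinearMap ∘ₗ Coalgebra.comul) h.toLinearMap u *
        LL f.toLinearMap g.toLinearMap R := by
    intro u
    induction u with
    | zero => simp
    | add a b ha hb => simp only [map_add, add_mul, mul_add, ha, hb]
    | tmul x y =>
      rw [LL_tmul, LL_tmul, LinearMap.comp_apply, LinearMap.comp_apply, mul_assoc,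
        Com_LL h2.symm h3.symm, ← mul_assoc, ← mul_assoc, ← LL_mul f g h1, hR.2.2.2.2,
        LL_mul f g h1, LL_comm h1]
  exact key _

lemma eL_R (hR : IsUnivRMatrix k H R Rinv) :
    TensorProduct.lid k H (TensorProduct.map Coalgebra.counit LinearMap.id R) = 1 := by
  have e := R_left (A := H ⊗[k] H) aug Algebra.TensorProduct.includeLeft
    Algebra.TensorProduct.includeRight hR (aug_com_left _) (aug_com_left _)
    (by intro x y; simp)
  rw [LL_aug_comul, LL_incl, LL_aug_left] at e
  have e2 := congrArg (· * Rinv) e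
  simp only [mul_assoc, hR.1, mul_one] at e2
  have e3 := congrArg (fun t => TensorProduct.lid k H
    (TensorProduct.map Coalgebra.counit LinearMap.id t)) e2
  simpa [Algebra.TensorProduct.one_def] using e3.symm

lemma eR_R (hR : IsUnivRMatrix k H R Rinv) :
    TensorProduct.rid k H (TensorProduct.map LinearMap.id Coalgebra.counit R) = 1 := by
  have e := R_right (A := H ⊗[k] H) Algebra.TensorProduct.includeLeft
    Algebra.TensorProduct.includeRight aug hR
    (by intro x y; simp) (aug_com_right _) (aug_com_right _)
  rw [LL_comul_aug, LL_incl, LL_aug_right] at e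
  have e2 := congrArg (· * Rinv) e
  simp only [mul_assoc, hR.1, mul_one] at e2
  have e3 := congrArg (fun t => TensorProduct.rid k H
    (TensorProduct.map LinearMap.id Coalgebra.counit t)) e2
  simpa [Algebra.TensorProduct.one_def] using e3.symm

lemma counit_tau (hτ : IsSkewInvolution k H τ) (x : H) :
    Coalgebra.counit (R := k) (τ x) = Coalgebra.counit (R := k) x :=
  LinearMap.congr_fun hτ.2.2.2.2 x

lemma eL_S (hR : IsUnivRMatrix k H R Rinv) (hτ : IsSkewInvolution k H τ) :
    TensorProduct.lid k H (TensorProduct.map Coalgebra.counit LinearMap.id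
      (TensorProduct.map τ τ R)) = 1 := by
  have key : ∀ u : H ⊗[k] H, TensorProduct.lid k H (TensorProduct.map Coalgebra.counit LinearMap.id
      (TensorProduct.map τ τ u)) = τ (TensorProduct.lid k H
        (TensorProduct.map Coalgebra.counit LinearMap.id u)) := by
    intro u
    induction u with
    | zero => simp
    | add a b ha hb => simp only [map_add, ha, hb]
    | tmul x y => simp [counit_tau hτ]
  rw [key, eL_R hR, hτ.2.2.1]

lemma eR_S (hR : IsUnivRMatrix k H R Rinv) (hτ : IsSkewInvolution k H τ) :
    TensorProduct.rid k H (TensorProduct.map LinearMap.id Coalgebra.counit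
      (TensorProduct.map τ τ R)) = 1 := by
  have key : ∀ u : H ⊗[k] H, TensorProduct.rid k H (TensorProduct.map LinearMap.id Coalgebra.counit
      (TensorProduct.map τ τ u)) = τ (TensorProduct.rid k H
        (TensorProduct.map LinearMap.id Coalgebra.counit u)) := by
    intro u
    induction u with
    | zero => simp
    | add a b ha hb => simp only [map_add, ha, hb]
    | tmul x y => simp [counit_tau hτ]
  rw [key, eR_R hR, hτ.2.2.1]

end Rlemmas

section Legs

variable (k H)

/-- leg 0 of three. -/
noncomputable def j0 : H →ₐ[k] H ⊗[k] (H ⊗[k] H) := Algebra.TensorProduct.includeLeft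
/-- leg 1 of three. -/
noncomputable def j1 : H →ₐ[k] H ⊗[k] (H ⊗[k] H) :=
  Algebra.TensorProduct.includeRight.comp Algebra.TensorProduct.includeLeft
/-- leg 2 of three. -/
noncomputable def j2 : H →ₐ[k] H ⊗[k] (H ⊗[k] H) :=
  Algebra.TensorProduct.includeRight.comp Algebra.TensorProduct.includeRight

/-- leg 0 of five. -/
noncomputable def i0 : H →ₐ[k] H ⊗[k] ((H ⊗[k] H) ⊗[k] (H ⊗[k] H)) :=
  Algebra.TensorProduct.includeLeft
/-- leg 1 of five. -/
noncomputable def i1 : H →ₐ[k] H ⊗[k] ((H ⊗[k] H) ⊗[k] (H ⊗[k] H)) :=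
  Algebra.TensorProduct.includeRight.comp
    (Algebra.TensorProduct.includeLeft.comp Algebra.TensorProduct.includeLeft)
/-- leg 2 of five. -/
noncomputable def i2 : H →ₐ[k] H ⊗[k] ((H ⊗[k] H) ⊗[k] (H ⊗[k] H)) :=
  Algebra.TensorProduct.includeRight.comp
    (Algebra.TensorProduct.includeLeft.comp Algebra.TensorProduct.includeRight)
/-- leg 3 of five. -/
noncomputable def i3 : H →ₐ[k] H ⊗[k] ((H ⊗[k] H) ⊗[k] (H ⊗[k] H)) :=
  Algebra.TensorProduct.includeRight.comp
    (Algebra.TensorProduct.includeRight.comp Algebra.TensorProduct.includeLeft)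
/-- leg 4 of five. -/
noncomputable def i4 : H →ₐ[k] H ⊗[k] ((H ⊗[k] H) ⊗[k] (H ⊗[k] H)) :=
  Algebra.TensorProduct.includeRight.comp
    (Algebra.TensorProduct.includeRight.comp Algebra.TensorProduct.includeRight)

/-- leg 1 of four. -/
noncomputable def p1 : H →ₐ[k] H ⊗[k] (H ⊗[k] (H ⊗[k] H)) := Algebra.TensorProduct.includeLeft
/-- leg 2 of four. -/
noncomputable def p2 : H →ₐ[k] H ⊗[k] (H ⊗[k] (H ⊗[k] H)) :=
  Algebra.TensorProduct.includeRight.comp Algebra.TensorProduct.includeLeft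
/-- leg 3 of four. -/
noncomputable def p3 : H →ₐ[k] H ⊗[k] (H ⊗[k] (H ⊗[k] H)) :=
  Algebra.TensorProduct.includeRight.comp
    (Algebra.TensorProduct.includeRight.comp Algebra.TensorProduct.includeLeft)
/-- leg 4 of four. -/
noncomputable def p4 : H →ₐ[k] H ⊗[k] (H ⊗[k] (H ⊗[k] H)) :=
  Algebra.TensorProduct.includeRight.comp
    (Algebra.TensorProduct.includeRight.comp Algebra.TensorProduct.includeRight)

/-- the natural comultiplication as an algebra map. -/
noncomputable def comulSqAlg : H ⊗[k] H →ₐ[k] (H ⊗[k] H) ⊗[k] (H ⊗[k] H) :=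
  (Algebra.TensorProduct.tensorTensorTensorComm k k k k H H H H).toAlgHom.comp
    (Algebra.TensorProduct.map (Bialgebra.comulAlgHom k H) (Bialgebra.comulAlgHom k H))

lemma comulSqAlg_eq : (comulSqAlg k H).toLinearMap = comulSq k H := by
  apply TensorProduct.ext'
  intro x y
  simp [comulSqAlg, comulSq]

/-- comultiply the last two legs. -/
noncomputable def EE : H ⊗[k] (H ⊗[k] H) →ₐ[k] H ⊗[k] ((H ⊗[k] H) ⊗[k] (H ⊗[k] H)) :=
  Algebra.TensorProduct.map (AlgHom.id k H) (comulSqAlg k H)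

variable {k H}

lemma EE_eq (X : H ⊗[k] (H ⊗[k] H)) :
    EE k H X = TensorProduct.map LinearMap.id (comulSq k H) X := by
  rw [← comulSqAlg_eq]; rfl

/-- the kernel of `Φ`. -/
noncomputable def KK (S R : H ⊗[k] H) : H ⊗[k] (H ⊗[k] H) :=
  LL (j0 k H).toLinearMap (j1 k H).toLinearMap S * LL (j2 k H).toLinearMap (j0 k H).toLinearMap R

lemma KK_eq (S R : H ⊗[k] H) : incl S * incr (TensorProduct.comm k H H R) = KK S R := by
  unfold KK
  congr 1
  · induction S with
    | zero => simp
    | add a b ha hb => simp only [map_add, ha, hb]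
    | tmul x y => simp [j0, j1]
  · induction R with
    | zero => simp
    | add a b ha hb => simp only [map_add, ha, hb]
    | tmul x y => simp [j0, j2]

lemma incl_KK (S R : H ⊗[k] H) : (incl (KK S R) : H ⊗[k] ((H ⊗[k] H) ⊗[k] (H ⊗[k] H))) =
    LL (i0 k H).toLinearMap (i1 k H).toLinearMap S
      * LL (i2 k H).toLinearMap (i0 k H).toLinearMap R := by
  unfold KK
  rw [map_mul, LL_hom, LL_hom]
  congr 3

lemma incr_KK (S R : H ⊗[k] H) : (incr (KK S R) : H ⊗[k] ((H ⊗[k] H) ⊗[k] (H ⊗[k] H))) =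
    LL (i0 k H).toLinearMap (i3 k H).toLinearMap S
      * LL (i4 k H).toLinearMap (i0 k H).toLinearMap R := by
  unfold KK
  rw [map_mul, LL_hom, LL_hom]
  congr 3

lemma EE_j0 : (EE k H).toLinearMap ∘ₗ (j0 k H).toLinearMap = (i0 k H).toLinearMap := by
  ext x; simp [EE, j0, i0]

lemma EE_j1 : (EE k H).toLinearMap ∘ₗ (j1 k H).toLinearMap =
    LL (k := k) (H := H) (A := H ⊗[k] ((H ⊗[k] H) ⊗[k] (H ⊗[k] H)))
      (i1 k H).toLinearMap (i3 k H).toLinearMap ∘ₗ Coalgebra.comul := by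
  ext x
  have key : ∀ w : H ⊗[k] H, (1 : H) ⊗ₜ[k] (TensorProduct.tensorTensorTensorComm k H H H H
      (w ⊗ₜ[k] ((1 : H) ⊗ₜ[k] (1 : H)))) = LL (i1 k H).toLinearMap (i3 k H).toLinearMap w := by
    intro w
    induction w with
    | zero => simp
    | add a b ha hb => simp only [map_add, TensorProduct.add_tmul, TensorProduct.tmul_add, ha, hb]
    | tmul x y => simp [i1, i3, Algebra.TensorProduct.one_def]
  simp only [LinearMap.comp_apply, AlgHom.toLinearMap_apply, EE_eq]
  simp [j1, comulSq, ← key, Algebra.TensorProduct.one_def]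

lemma EE_j2 : (EE k H).toLinearMap ∘ₗ (j2 k H).toLinearMap =
    LL (k := k) (H := H) (A := H ⊗[k] ((H ⊗[k] H) ⊗[k] (H ⊗[k] H)))
      (i2 k H).toLinearMap (i4 k H).toLinearMap ∘ₗ Coalgebra.comul := by
  ext x
  have key : ∀ w : H ⊗[k] H, (1 : H) ⊗ₜ[k] (TensorProduct.tensorTensorTensorComm k H H H H
      (((1 : H) ⊗ₜ[k] (1 : H)) ⊗ₜ[k] w)) = LL (i2 k H).toLinearMap (i4 k H).toLinearMap w := by
    intro w
    induction w with
    | zero => simp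
    | add a b ha hb => simp only [map_add, TensorProduct.tmul_add, ha, hb]
    | tmul x y => simp [i2, i4, Algebra.TensorProduct.one_def]
  simp only [LinearMap.comp_apply, AlgHom.toLinearMap_apply, EE_eq]
  simp [j2, comulSq, ← key, Algebra.TensorProduct.one_def]

lemma hom_KK (E : H ⊗[k] (H ⊗[k] H) →ₐ[k] A) (f0 f1 f2 : H →ₗ[k] A)
    (h0 : ∀ x, E (j0 k H x) = f0 x) (h1 : ∀ x, E (j1 k H x) = f1 x)
    (h2 : ∀ x, E (j2 k H x) = f2 x) (S R : H ⊗[k] H) :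
    E (KK S R) = LL f0 f1 S * LL f2 f0 R := by
  have e0 : E.toLinearMap ∘ₗ (j0 k H).toLinearMap = f0 := LinearMap.ext h0
  have e1 : E.toLinearMap ∘ₗ (j1 k H).toLinearMap = f1 := LinearMap.ext h1
  have e2 : E.toLinearMap ∘ₗ (j2 k H).toLinearMap = f2 := LinearMap.ext h2
  rw [KK, map_mul, LL_hom, LL_hom, e0, e1, e2]

lemma EE_KK (S R : H ⊗[k] H) : EE k H (KK S R) =
    LL (i0 k H).toLinearMap (LL (k := k) (H := H) (A := H ⊗[k] ((H ⊗[k] H) ⊗[k] (H ⊗[k] H)))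
      (i1 k H).toLinearMap (i3 k H).toLinearMap ∘ₗ Coalgebra.comul) S *
    LL (LL (k := k) (H := H) (A := H ⊗[k] ((H ⊗[k] H) ⊗[k] (H ⊗[k] H)))
      (i2 k H).toLinearMap (i4 k H).toLinearMap ∘ₗ Coalgebra.comul) (i0 k H).toLinearMap R := by
  refine hom_KK (A := H ⊗[k] ((H ⊗[k] H) ⊗[k] (H ⊗[k] H))) (EE k H) _ _ _ ?_ ?_ ?_ S R
  · intro x
    exact LinearMap.congr_fun (EE_j0 (k := k) (H := H)) x
  · intro x
    exact LinearMap.congr_fun (EE_j1 (k := k) (H := H)) x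
  · intro x
    exact LinearMap.congr_fun (EE_j2 (k := k) (H := H)) x

lemma sq_eq (u : H ⊗[k] H) : (1 : H) ⊗ₜ[k] sqleg23 k H u =
    LL (i2 k H).toLinearMap (i3 k H).toLinearMap u := by
  induction u with
  | zero => simp
  | add a b ha hb => simp only [map_add, TensorProduct.tmul_add, ha, hb]
  | tmul x y => simp [i2, i3, sqleg23, Algebra.TensorProduct.one_def]

lemma DD_j0 : (DD (k := k) (H := H) (A := H ⊗[k] H)).toLinearMap ∘ₗ (j0 k H).toLinearMap =
    LL (p1 k H).toLinearMap (p2 k H).toLinearMap ∘ₗ Coalgebra.comul := by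
  ext x
  have key : ∀ w : H ⊗[k] H, TensorProduct.assoc k H H (H ⊗[k] H) (w ⊗ₜ[k] (1 : H ⊗[k] H))
      = LL (p1 k H).toLinearMap (p2 k H).toLinearMap w := by
    intro w
    induction w with
    | zero => simp
    | add a b ha hb => simp only [map_add, TensorProduct.add_tmul, ha, hb]
    | tmul x y => simp [p1, p2, Algebra.TensorProduct.one_def]
  simp only [LinearMap.comp_apply, AlgHom.toLinearMap_apply, j0,
    Algebra.TensorProduct.includeLeft_apply, DD_tmul, key]

lemma DD_j1 : (DD (k := k) (H := H) (A := H ⊗[k] H)).toLinearMap ∘ₗ (j1 k H).toLinearMap =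
    (p3 k H).toLinearMap := by
  ext x
  simp [j1, DD_tmul, p3, Algebra.TensorProduct.one_def]

lemma DD_j2 : (DD (k := k) (H := H) (A := H ⊗[k] H)).toLinearMap ∘ₗ (j2 k H).toLinearMap =
    (p4 k H).toLinearMap := by
  ext x
  simp [j2, DD_tmul, p4, Algebra.TensorProduct.one_def]

lemma incr_KK' (S R : H ⊗[k] H) : (incr (KK S R) : H ⊗[k] (H ⊗[k] (H ⊗[k] H))) =
    LL (p1 k H).toLinearMap (p3 k H).toLinearMap S
      * LL (p4 k H).toLinearMap (p1 k H).toLinearMap R := by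
  unfold KK
  rw [map_mul, LL_hom, LL_hom]
  congr 3

lemma one_KK (S R : H ⊗[k] H) : (1 : H) ⊗ₜ[k] (KK S R) =
    LL (p2 k H).toLinearMap (p3 k H).toLinearMap S
      * LL (p4 k H).toLinearMap (p2 k H).toLinearMap R := by
  unfold KK
  rw [← Algebra.TensorProduct.includeRight_apply (R := k), map_mul, LL_hom, LL_hom]
  congr 3

lemma mul_mul_swap {T : Type*} [Ring T] (a b c d : T) (q : b * c = c * b) :
    a * b * (c * d) = a * c * (b * d) := by
  rw [mul_assoc, ← mul_assoc b, q]; simp only [mul_assoc]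

lemma DD_KK (hR : IsUnivRMatrix k H R Rinv) (hτ : IsSkewInvolution k H τ) :
    DD (KK (TensorProduct.map τ τ R) R) = ((1 : H) ⊗ₜ[k] KK (TensorProduct.map τ τ R) R)
      * incr (KK (TensorProduct.map τ τ R) R) := by
  have c12 : Com (k := k) (H := H) (A := H ⊗[k] (H ⊗[k] (H ⊗[k] H)))
      (p1 k H).toLinearMap (p2 k H).toLinearMap := by intro x y; simp [p1, p2]
  have c13 : Com (k := k) (H := H) (A := H ⊗[k] (H ⊗[k] (H ⊗[k] H)))
      (p1 k H).toLinearMap (p3 k H).toLinearMap := by intro x y; simp [p1, p3]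
  have c23 : Com (k := k) (H := H) (A := H ⊗[k] (H ⊗[k] (H ⊗[k] H)))
      (p2 k H).toLinearMap (p3 k H).toLinearMap := by intro x y; simp [p2, p3]
  have c14 : Com (k := k) (H := H) (A := H ⊗[k] (H ⊗[k] (H ⊗[k] H)))
      (p1 k H).toLinearMap (p4 k H).toLinearMap := by intro x y; simp [p1, p4]
  have c24 : Com (k := k) (H := H) (A := H ⊗[k] (H ⊗[k] (H ⊗[k] H)))
      (p2 k H).toLinearMap (p4 k H).toLinearMap := by intro x y; simp [p2, p4]
  have c34 : Com (k := k) (H := H) (A := H ⊗[k] (H ⊗[k] (H ⊗[k] H)))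
      (p3 k H).toLinearMap (p4 k H).toLinearMap := by intro x y; simp [p3, p4]
  rw [one_KK, incr_KK', KK, map_mul, LL_hom, LL_hom, DD_j0, DD_j1, DD_j2,
    S_left _ _ _ hR hτ c12 c13 c23, R_right _ _ _ hR c14.symm c24.symm c12]
  exact mul_mul_swap _ _ _ _ (LL_commute c14 c12 c34.symm.symm c23.symm _ _)

lemma sq_core (hR : IsUnivRMatrix k H R Rinv) (hτ : IsSkewInvolution k H τ)
    (i0 i1 i2 i3 i4 : H →ₐ[k] A)
    (c01 : Com i0.toLinearMap i1.toLinearMap)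
    (c02 : Com i0.toLinearMap i2.toLinearMap)
    (c03 : Com i0.toLinearMap i3.toLinearMap)
    (c04 : Com i0.toLinearMap i4.toLinearMap)
    (c12 : Com i1.toLinearMap i2.toLinearMap)
    (c13 : Com i1.toLinearMap i3.toLinearMap)
    (c23 : Com i2.toLinearMap i3.toLinearMap)
    (c24 : Com i2.toLinearMap i4.toLinearMap)
    (c34 : Com i3.toLinearMap i4.toLinearMap) :
    LL i0.toLinearMap i1.toLinearMap (TensorProduct.map τ τ R) * LL i2.toLinearMap i0.toLinearMap R *
      (LL i0.toLinearMap i3.toLinearMap (TensorProduct.map τ τ R) *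
        LL i4.toLinearMap i0.toLinearMap R) =
    LL i2.toLinearMap i3.toLinearMap (TensorProduct.map τ τ R) *
      (LL i0.toLinearMap (LL i1.toLinearMap i3.toLinearMap ∘ₗ Coalgebra.comul)
          (TensorProduct.map τ τ R) *
        LL (LL i2.toLinearMap i4.toLinearMap ∘ₗ Coalgebra.comul) i0.toLinearMap R) *
      LL i2.toLinearMap i3.toLinearMap (TensorProduct.map τ τ Rinv) := by
  rw [S_right _ _ _ hR hτ c01 c03 c13, R_left _ _ _ hR c24 c02.symm c04.symm]
  have yb := YB i2 i0 i3 hR hτ c02.symm c23 c03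
  have hinv : LL i2.toLinearMap i3.toLinearMap (TensorProduct.map τ τ R) *
      LL i2.toLinearMap i3.toLinearMap (TensorProduct.map τ τ Rinv) = 1 := by
    rw [← LL_mul _ _ c23, ← tau2_mul hτ, hR.2.1]
    simp [Algebra.TensorProduct.one_def, hτ.2.2.1]
  have q1 := LL_commute c02.symm c12.symm c03.symm c13.symm
    (TensorProduct.map τ τ R) (TensorProduct.map τ τ R)
  have q2 := LL_commute c24.symm c34.symm c02 c03 R (TensorProduct.map τ τ Rinv)
  generalize TensorProduct.map τ τ R = S at *
  generalize TensorProduct.map τ τ Rinv = Si at *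
  generalize LL i2.toLinearMap i3.toLinearMap S = s23 at *
  generalize LL i2.toLinearMap i3.toLinearMap Si = t23 at *
  generalize LL i0.toLinearMap i1.toLinearMap S = s01 at *
  generalize LL i0.toLinearMap i3.toLinearMap S = s03 at *
  generalize LL i2.toLinearMap i0.toLinearMap R = r20 at *
  generalize LL i4.toLinearMap i0.toLinearMap R = r40 at *
  symm
  calc s23 * (s01 * s03 * (r20 * r40)) * t23
      = (s23 * s01) * s03 * r20 * (r40 * t23) := by simp only [mul_assoc]
    _ = s01 * (s23 * s03 * r20) * t23 * r40 := by rw [q1, q2]; simp only [mul_assoc]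
    _ = s01 * r20 * s03 * (s23 * t23) * r40 := by rw [← yb]; simp only [mul_assoc]
    _ = s01 * r20 * (s03 * r40) := by rw [hinv]; simp only [mul_assoc, mul_one, one_mul]

lemma sq_KK (hR : IsUnivRMatrix k H R Rinv) (hτ : IsSkewInvolution k H τ) :
    (incl (KK (TensorProduct.map τ τ R) R) * incr (KK (TensorProduct.map τ τ R) R) :
      H ⊗[k] ((H ⊗[k] H) ⊗[k] (H ⊗[k] H))) =
    ((1 : H) ⊗ₜ[k] sqleg23 k H (TensorProduct.map τ τ R)) *
      TensorProduct.map LinearMap.id (comulSq k H) (KK (TensorProduct.map τ τ R) R) *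
      ((1 : H) ⊗ₜ[k] sqleg23 k H (TensorProduct.map τ τ Rinv)) := by
  have c01 : Com (k := k) (H := H) (A := H ⊗[k] ((H ⊗[k] H) ⊗[k] (H ⊗[k] H)))
      (i0 k H).toLinearMap (i1 k H).toLinearMap := by intro x y; simp [i0, i1]
  have c02 : Com (k := k) (H := H) (A := H ⊗[k] ((H ⊗[k] H) ⊗[k] (H ⊗[k] H)))
      (i0 k H).toLinearMap (i2 k H).toLinearMap := by intro x y; simp [i0, i2]
  have c03 : Com (k := k) (H := H) (A := H ⊗[k] ((H ⊗[k] H) ⊗[k] (H ⊗[k] H)))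
      (i0 k H).toLinearMap (i3 k H).toLinearMap := by intro x y; simp [i0, i3]
  have c04 : Com (k := k) (H := H) (A := H ⊗[k] ((H ⊗[k] H) ⊗[k] (H ⊗[k] H)))
      (i0 k H).toLinearMap (i4 k H).toLinearMap := by intro x y; simp [i0, i4]
  have c12 : Com (k := k) (H := H) (A := H ⊗[k] ((H ⊗[k] H) ⊗[k] (H ⊗[k] H)))
      (i1 k H).toLinearMap (i2 k H).toLinearMap := by intro x y; simp [i1, i2]
  have c13 : Com (k := k) (H := H) (A := H ⊗[k] ((H ⊗[k] H) ⊗[k] (H ⊗[k] H)))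
      (i1 k H).toLinearMap (i3 k H).toLinearMap := by intro x y; simp [i1, i3]
  have c23 : Com (k := k) (H := H) (A := H ⊗[k] ((H ⊗[k] H) ⊗[k] (H ⊗[k] H)))
      (i2 k H).toLinearMap (i3 k H).toLinearMap := by intro x y; simp [i2, i3]
  have c24 : Com (k := k) (H := H) (A := H ⊗[k] ((H ⊗[k] H) ⊗[k] (H ⊗[k] H)))
      (i2 k H).toLinearMap (i4 k H).toLinearMap := by intro x y; simp [i2, i4]
  have c34 : Com (k := k) (H := H) (A := H ⊗[k] ((H ⊗[k] H) ⊗[k] (H ⊗[k] H)))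
      (i3 k H).toLinearMap (i4 k H).toLinearMap := by intro x y; simp [i3, i4]
  rw [incl_KK, incr_KK, sq_eq, sq_eq, ← EE_eq, EE_KK]
  exact sq_core hR hτ _ _ _ _ _ c01 c02 c03 c04 c12 c13 c23 c24 c34

/-- counit on the first leg. -/
noncomputable def epsL : H ⊗[k] (H ⊗[k] H) →ₐ[k] H ⊗[k] H :=
  (Algebra.TensorProduct.lid k (H ⊗[k] H)).toAlgHom.comp
    (Algebra.TensorProduct.map (Bialgebra.counitAlgHom k H) (AlgHom.id k (H ⊗[k] H)))

/-- counit on the last two legs. -/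
noncomputable def epsR : H ⊗[k] (H ⊗[k] H) →ₐ[k] H :=
  (Algebra.TensorProduct.rid k k H).toAlgHom.comp
    (Algebra.TensorProduct.map (AlgHom.id k H)
      ((Algebra.TensorProduct.lid k k).toAlgHom.comp
        (Algebra.TensorProduct.map (Bialgebra.counitAlgHom k H) (Bialgebra.counitAlgHom k H))))

lemma epsL_KK (hR : IsUnivRMatrix k H R Rinv) (hτ : IsSkewInvolution k H τ) :
    ctr (KK (TensorProduct.map τ τ R) R) (Coalgebra.counit (R := k) (A := H)) = 1 := by
  have h : ∀ X : H ⊗[k] (H ⊗[k] H), ctr X (Coalgebra.counit (R := k) (A := H)) = epsL X := by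
    intro X
    induction X with
    | zero => simp
    | add a b ha hb => simp only [map_add, ctr_add, ha, hb]
    | tmul x y => simp [epsL]
  have h0 : (epsL (k := k) (H := H)).toLinearMap ∘ₗ (j0 k H).toLinearMap =
      (aug : H →ₐ[k] H ⊗[k] H).toLinearMap := by
    ext x
    simp [epsL, j0, aug, Algebra.ofId_apply, Algebra.algebraMap_eq_smul_one]
  rw [h, KK, map_mul, LL_hom, LL_hom, h0, LL_aug_left, LL_aug_right, eL_S hR hτ, eR_R hR]
  simp [epsL, j1, j2, Algebra.TensorProduct.one_def]

lemma epsR_KK (hR : IsUnivRMatrix k H R Rinv) (hτ : IsSkewInvolution k H τ)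
    (η : Module.Dual k H) :
    (LinearMap.mul' k k) ((TensorProduct.map (Coalgebra.counit (R := k))
        (Coalgebra.counit (R := k))) (ctr (KK (TensorProduct.map τ τ R) R) η)) = η 1 := by
  have h : ∀ X : H ⊗[k] (H ⊗[k] H), (LinearMap.mul' k k) ((TensorProduct.map
      (Coalgebra.counit (R := k)) (Coalgebra.counit (R := k))) (ctr X η)) = η (epsR X) := by
    intro X
    induction X with
    | zero => simp
    | add a b ha hb => simp only [map_add, ctr_add, ha, hb]
    | tmul x u =>
      induction u with
      | zero => simp
      | add a b ha hb => simp only [map_add, TensorProduct.tmul_add, ctr_add, ha, hb]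
      | tmul y z => simp [epsR, mul_comm]
  have h1 : (epsR (k := k) (H := H)).toLinearMap ∘ₗ (j1 k H).toLinearMap =
      (aug : H →ₐ[k] H).toLinearMap := by
    ext x
    simp [epsR, j1, aug, Algebra.ofId_apply, Algebra.algebraMap_eq_smul_one]
  have h2 : (epsR (k := k) (H := H)).toLinearMap ∘ₗ (j2 k H).toLinearMap =
      (aug : H →ₐ[k] H).toLinearMap := by
    ext x
    simp [epsR, j2, aug, Algebra.ofId_apply, Algebra.algebraMap_eq_smul_one]
  rw [h, KK, map_mul, LL_hom, LL_hom, h1, h2, LL_aug_left, LL_aug_right, eR_S hR hτ, eL_R hR]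
  simp [epsR, j0, Algebra.TensorProduct.one_def]

end Legs

end Aux

/-- let `H` be a finite-dimensional quasitriangular bialgebra with R-matrix
`R` and skew involution `τ`, and let `Φ⁺(η) = ⟨η, τ(R₁)⟩ τ(R₂)`, `Φ⁻(η) = ⟨η, R₂⟩ R₁`.
Then `Φ : η ↦ Φ⁺(η⁽¹⁾) ⊗ Φ⁻(η⁽²⁾)` is a bialgebra homomorphism from `H*_op` to the
twisted tensor square `H ⊗_{R_τ} H` (where `R_τ = (τ⊗τ)(R⁻¹)`): it is unital and
multiplicative for the opposite convolution product, and intertwines the dual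
comultiplication with the `(R_τ)₂₃`-twisted comultiplication of `H ⊗ H`, as well as the
counits. -/
theorem Phi_bialgebra_hom_to_twisted_square
    {k H : Type*} [Field k] [Ring H] [Bialgebra k H] [FiniteDimensional k H]
    (R Rinv : H ⊗[k] H) (hR : IsUnivRMatrix k H R Rinv)
    (τ : H →ₗ[k] H) (hτ : IsSkewInvolution k H τ) :
    letI Φ : Module.Dual k H →ₗ[k] H ⊗[k] H :=
      (TensorProduct.map (contractFst k H ((TensorProduct.map τ τ) R))
        (contractSnd k H R)) ∘ₗ comulDual k H
    -- Φ is an algebra map from H*_op :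
    (Φ (Coalgebra.counit (R := k) (A := H)) = 1) ∧
    (∀ η ξ : Module.Dual k H, Φ (conv k H ξ η) = Φ η * Φ ξ) ∧
    -- Φ intertwines the dual comultiplication with the twisted comultiplication :
    (∀ η : Module.Dual k H,
      (TensorProduct.map Φ Φ) (comulDual k H η) =
        sqleg23 k H ((TensorProduct.map τ τ) R) * comulSq k H (Φ η) *
          sqleg23 k H ((TensorProduct.map τ τ) Rinv)) ∧
    -- Φ respects the counits :
    (∀ η : Module.Dual k H,
      (LinearMap.mul' k k) ((TensorProduct.map (Coalgebra.counit (R := k))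
        (Coalgebra.counit (R := k))) (Φ η)) = η 1) := by
  have hΦ : ∀ η : Module.Dual k H, ((TensorProduct.map (contractFst k H ((TensorProduct.map τ τ) R))
        (contractSnd k H R)) ∘ₗ comulDual k H) η = ctr (KK (TensorProduct.map τ τ R) R) η := by
    intro η
    rw [LinearMap.comp_apply, map_ctr_comulDual (TensorProduct.map τ τ R)
      (TensorProduct.comm k H H R) _ _ (fun f => rfl), KK_eq]
    exact contractSnd_eq R
  refine ⟨?_, ?_, ?_, ?_⟩
  · rw [hΦ]; exact epsL_KK hR hτ
  · intro η ξ
    rw [hΦ, hΦ, hΦ, ctr_conv, DD_KK hR hτ, ctr_mul_ctr]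
  · intro η
    rw [map_ctr_comulDual _ _ _ _ hΦ hΦ, hΦ, sq_KK hR hτ, ctr_mul_right, ctr_mul_left, ctr_map]
  · intro η
    rw [hΦ]; exact epsR_KK hR hτ η
end
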